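/- Let p be a real number with 1 ≤ p < ∞, and let G : ℓ^m → ℓ^r be strictly causal and ℓ_p-stable. Let Ψ^{u°} : ℓ^r × ℓ^m → ℓ^m be causal–strictly-causal, and define Ψ^u(v,d) := d + Ψ^{u°}(v,d) and Ψ^y(v,d) := G(Ψ^u(v,d)) + v. Then the map (Ψ^y, Ψ^u) is ℓ_p-stable — i.e., Ψ^y(v,d) ∈ ℓ_p^r and Ψ^u(v,d) ∈ ℓ_p^m whenever v ∈ ℓ_p^r and d ∈ ℓ_p^m — if and only if Ψ^{u°} is ℓ_p-stable, i.e., Ψ^{u°}(v,d) ∈ ℓ_p^m whenever v ∈ ℓ_p^r and d ∈ ℓ_p^m. -/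

import Mathlib

/-- Sequences with values in `ℝ^n` (with the Euclidean norm). -/
abbrev Traj (n : ℕ) : Type := ℕ → EuclideanSpace ℝ (Fin n)

/-- A causal operator on sequences. -/
def Causal {n m : ℕ} (A : Traj n → Traj m) : Prop :=
  ∀ (x x' : Traj n) (t : ℕ), (∀ s, s ≤ t → x s = x' s) → A x t = A x' t

/-- A strictly causal operator on sequences. -/
def StrictlyCausal {n m : ℕ} (A : Traj n → Traj m) : Prop :=
  ∀ (x x' : Traj n) (t : ℕ), (∀ s, s < t → x s = x' s) → A x t = A x' t

/-- Causal in the first argument, strictly causal in the second argument. -/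
def CausalSC {n q m : ℕ} (B : Traj n → Traj q → Traj m) : Prop :=
  ∀ (x x' : Traj n) (z z' : Traj q) (t : ℕ),
    (∀ s, s ≤ t → x s = x' s) → (∀ s, s < t → z s = z' s) → B x z t = B x' z' t

/-- Causal in both arguments. -/
def CausalCC {n q m : ℕ} (B : Traj n → Traj q → Traj m) : Prop :=
  ∀ (x x' : Traj n) (z z' : Traj q) (t : ℕ),
    (∀ s, s ≤ t → x s = x' s) → (∀ s, s ≤ t → z s = z' s) → B x z t = B x' z' t

/-- Strictly causal in both arguments. -/
def CausalSS {n q m : ℕ} (B : Traj n → Traj q → Traj m) : Prop :=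
  ∀ (x x' : Traj n) (z z' : Traj q) (t : ℕ),
    (∀ s, s < t → x s = x' s) → (∀ s, s < t → z s = z' s) → B x z t = B x' z' t

/-- Membership in `ℓ_p`: summability of `‖x t‖ ^ p`. -/
def InLp (p : ℝ) {E : Type*} [Norm E] (x : ℕ → E) : Prop :=
  Summable fun t => ‖x t‖ ^ p

/-- The `ℓ_p` norm `(∑ₜ ‖x t‖ ^ p) ^ (1/p)` of a sequence. -/
noncomputable def lpSeqNorm (p : ℝ) {E : Type*} [Norm E] (x : ℕ → E) : ℝ :=
  (∑' t, ‖x t‖ ^ p) ^ (1 / p)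

/-- The `ℝ^{r+m}`-valued sequence obtained by stacking `v` and `d`
(the norm of `(v t, d t)` is the Euclidean norm of the concatenated vector). -/
noncomputable def pairSeq {r m : ℕ} (v : Traj r) (d : Traj m) :
    ℕ → WithLp 2 (EuclideanSpace ℝ (Fin r) × EuclideanSpace ℝ (Fin m)) :=
  fun t => (WithLp.equiv 2 _).symm (v t, d t)

/-- An exponentially decaying sequence: `‖x t‖ ≤ k · α ^ t` with `k > 0`, `α ∈ (0,1)`. -/
def ExpDecay {E : Type*} [Norm E] (x : ℕ → E) : Prop :=
  ∃ k : ℝ, 0 < k ∧ ∃ α : ℝ, 0 < α ∧ α < 1 ∧ ∀ t, ‖x t‖ ≤ k * α ^ t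

theorem inLp_iff_memlp {n : ℕ} (p : ℝ) (hp : 1 ≤ p) (x : Traj n) :
    InLp p x ↔ Memℓp x (ENNReal.ofReal p) := by
  have h : (ENNReal.ofReal p).toReal = p := ENNReal.toReal_ofReal (by linarith)
  rw [memℓp_gen_iff (by rw [h]; linarith), h]
  rfl

theorem inLp_add {n : ℕ} (p : ℝ) (hp : 1 ≤ p) (x y : Traj n)
    (hx : InLp p x) (hy : InLp p y) : InLp p (x + y) := by
  rw [inLp_iff_memlp p hp] at *
  exact hx.add hy

theorem inLp_neg {n : ℕ} (p : ℝ) (x : Traj n)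
    (hx : InLp p x) : InLp p (-x) := by
  simpa [InLp] using hx

/-- for a strictly causal ℓ_p-stable plant `G` and a causal–strictly-causal
parameter `Ψ^{u°}`, the closed-loop maps `Ψ^u(v,d) = d + Ψ^{u°}(v,d)`,
`Ψ^y(v,d) = G(Ψ^u(v,d)) + v` are ℓ_p-stable iff `Ψ^{u°}` is ℓ_p-stable. -/
theorem statement17 {r m : ℕ} (p : ℝ) (hp : 1 ≤ p)
    (G : Traj m → Traj r)
    (hG : StrictlyCausal G)
    (hGstab : ∀ u : Traj m, InLp p u → InLp p (G u))
    (Ψuo : Traj r → Traj m → Traj m)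
    (hΨuo : CausalSC Ψuo) :
    ((∀ (v : Traj r) (d : Traj m), InLp p v → InLp p d →
        InLp p (G (d + Ψuo v d) + v) ∧ InLp p (d + Ψuo v d))
      ↔
      (∀ (v : Traj r) (d : Traj m), InLp p v → InLp p d → InLp p (Ψuo v d))) := by
  constructor
  · intro h v d hv hd
    have h2 := inLp_add p hp _ _ (inLp_neg p d hd) (h v d hv hd).2
    rwa [neg_add_cancel_left] at h2
  · intro h v d hv hd
    have h2 := inLp_add p hp _ _ hd (h v d hv hd)
    exact ⟨inLp_add p hp _ _ (hGstab _ h2) hv, h2⟩
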